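/- Let θ ≥ 0, Σ : ℝ² → M₂(ℝ) continuous, T > 0, v : [0,T] → ℝ² continuous, and let z be a classical solution on [0,T] of the tire PDE with input v. Suppose Assumption 1 holds with constant ω > 0 and Assumption 2 holds for Σ. Define V(t) := (1/2)∫₀¹ z(ξ,t)ᵀ Q(ξ) z(ξ,t) dξ and F(t) := (𝒦₁ z(·,t)). Then for every t ∈ (0,T), F(t)ᵀ v(t) ≥ V′(t) + ω ∫₀¹ ‖z(ξ,t)‖² dξ. -/

import Mathlib

open MeasureTheory Matrix Set

noncomputable section

attribute [local instance] Matrix.normedAddCommGroup Matrix.normedSpace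

abbrev Vec2 := Fin 2 → ℝ
abbrev Mat2 := Matrix (Fin 2) (Fin 2) ℝ

/-- Nondimensional pressure distribution `p̄(ξ) = (a/(1-e^{-a})) e^{-aξ}`. -/
def pbar (a ξ : ℝ) : ℝ := a / (1 - Real.exp (-a)) * Real.exp (-a * ξ)

/-- The physical parameters of the single-track tire model. -/
structure TireParams where
  vx : ℝ
  L1 : ℝ
  L2 : ℝ
  Fz1 : ℝ
  Fz2 : ℝ
  σ1 : ℝ
  σ2 : ℝ
  a1 : ℝ
  a2 : ℝ
  φ1 : ℝ
  φ2 : ℝ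
  vx_pos : 0 < vx
  L1_pos : 0 < L1
  L2_pos : 0 < L2
  Fz1_pos : 0 < Fz1
  Fz2_pos : 0 < Fz2
  σ1_pos : 0 < σ1
  σ2_pos : 0 < σ2
  a1_pos : 0 < a1
  a2_pos : 0 < a2
  φ1_mem : φ1 ∈ Set.Ioc (0:ℝ) 1
  φ2_mem : φ2 ∈ Set.Ioc (0:ℝ) 1

namespace TireParams

variable (P : TireParams)

def ψ1 : ℝ := 1 - P.φ1
def ψ2 : ℝ := 1 - P.φ2

def Λmat : Mat2 := Matrix.diagonal ![P.vx / P.L1, P.vx / P.L2]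

def Hmat : Mat2 := (2:ℝ) • Matrix.diagonal ![P.φ1, P.φ2]

def K1 (ξ : ℝ) : Mat2 :=
  Matrix.diagonal ![P.Fz1 * P.σ1 * pbar P.a1 ξ, P.Fz2 * P.σ2 * pbar P.a2 ξ]

def K2 (ξ : ℝ) : Mat2 :=
  -Matrix.diagonal ![P.ψ1 * pbar P.a1 ξ, P.ψ2 * pbar P.a2 ξ]

def K3 (ξ : ℝ) : Mat2 :=
  -P.vx • Matrix.diagonal ![P.ψ1 / P.L1 * deriv (pbar P.a1) ξ, P.ψ2 / P.L2 * deriv (pbar P.a2) ξ]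

def K4 : Mat2 :=
  P.vx • Matrix.diagonal ![P.ψ1 / P.L1 * pbar P.a1 1, P.ψ2 / P.L2 * pbar P.a2 1]

def Q (ξ : ℝ) : Mat2 := P.K1 ξ * (P.Hmat)⁻¹

/-- `(𝒦ζ) = ∫₀¹ K(ξ) ζ(ξ) dξ`. -/
def Kop (K : ℝ → Mat2) (ζ : ℝ → Vec2) : Vec2 := ∫ ξ in (0:ℝ)..1, (K ξ).mulVec (ζ ξ)

def K1op (ζ : ℝ → Vec2) : Vec2 := Kop P.K1 ζ

def K2op (ζ : ℝ → Vec2) : Vec2 := Kop P.K2 ζ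

/-- `(𝒦₃ζ) = ∫₀¹ K₃(ξ)ζ(ξ)dξ + K₄ ζ(1)`. -/
def K3op (ζ : ℝ → Vec2) : Vec2 := Kop P.K3 ζ + (P.K4).mulVec (ζ 1)

/-- `(𝒜ζ)(ξ) = -Λ ζ'(ξ) + (𝒦₃ζ)`, expressed through a given derivative `ζ'`. -/
def Aop (ζ ζ' : ℝ → Vec2) (ξ : ℝ) : Vec2 := -(P.Λmat).mulVec (ζ' ξ) + P.K3op ζ

end TireParams

/-- `ζ` is C¹ on `[0,1]` with derivative `ζ'`. -/
def IsC1On01 (ζ ζ' : ℝ → Vec2) : Prop :=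
  (∀ ξ ∈ Icc (0:ℝ) 1, HasDerivWithinAt ζ (ζ' ξ) (Icc (0:ℝ) 1) ξ) ∧
    ContinuousOn ζ' (Icc (0:ℝ) 1)

/-- Square integrability on `(0,1)`. -/
def SqIntegrableOn01 (ζ : ℝ → Vec2) : Prop :=
  Measurable ζ ∧ IntervalIntegrable (fun ξ => ∑ i, (ζ ξ i) ^ 2) volume 0 1

/-- Assumption 1 (strict dissipativity of `𝒜`). -/
def Assumption1 (P : TireParams) (ω : ℝ) : Prop :=
  ∀ ζ ζ' : ℝ → Vec2, IsC1On01 ζ ζ' → ζ 0 = 0 →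
    (∫ ξ in (0:ℝ)..1, P.Aop ζ ζ' ξ ⬝ᵥ (P.Q ξ).mulVec (ζ ξ)) ≤
      -ω * ∫ ξ in (0:ℝ)..1, ∑ i, (ζ ξ i) ^ 2

/-- Assumption 2 (dissipativity of the source `Σ`). -/
def Assumption2 (P : TireParams) (S : Vec2 → Mat2) : Prop :=
  ∀ y : Vec2, ∀ ζ : ℝ → Vec2, SqIntegrableOn01 ζ →
    (∫ ξ in (0:ℝ)..1, ζ ξ ⬝ᵥ (P.Q ξ).mulVec ((S y).mulVec (ζ ξ + P.K2op ζ))) ≤ 0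

/-- `z` (with partial derivatives `zξ`, `zt`) is a classical solution on `[0,T]` of the tire
PDE with input `v`: `∂z/∂t + Λ ∂z/∂ξ = θΣ(v(t))[z + 𝒦₂z] + 𝒦₃z + Hv(t)`, `z(0,t) = 0`. -/
def IsClassicalSolution (P : TireParams) (θ : ℝ) (S : Vec2 → Mat2) (T : ℝ)
    (v : ℝ → Vec2) (z zξ zt : ℝ → ℝ → Vec2) : Prop :=
  (∀ t ∈ Icc (0:ℝ) T, ∀ ξ ∈ Icc (0:ℝ) 1,
      HasDerivWithinAt (fun s => z s t) (zξ ξ t) (Icc (0:ℝ) 1) ξ) ∧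
  (∀ ξ ∈ Icc (0:ℝ) 1, ∀ t ∈ Icc (0:ℝ) T,
      HasDerivWithinAt (fun s => z ξ s) (zt ξ t) (Icc (0:ℝ) T) t) ∧
  ContinuousOn (fun p : ℝ × ℝ => z p.1 p.2) (Icc (0:ℝ) 1 ×ˢ Icc (0:ℝ) T) ∧
  ContinuousOn (fun p : ℝ × ℝ => zξ p.1 p.2) (Icc (0:ℝ) 1 ×ˢ Icc (0:ℝ) T) ∧
  ContinuousOn (fun p : ℝ × ℝ => zt p.1 p.2) (Icc (0:ℝ) 1 ×ˢ Icc (0:ℝ) T) ∧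
  (∀ ξ ∈ Ioo (0:ℝ) 1, ∀ t ∈ Ioo (0:ℝ) T,
      zt ξ t + (P.Λmat).mulVec (zξ ξ t) =
        θ • (S (v t)).mulVec (z ξ t + P.K2op (fun s => z s t)) +
          P.K3op (fun s => z s t) + (P.Hmat).mulVec (v t)) ∧
  (∀ t ∈ Icc (0:ℝ) T, z 0 t = 0)

/-- The storage function `V(t) = ½∫₀¹ z(ξ,t)ᵀ Q(ξ) z(ξ,t) dξ`. -/
def storage (P : TireParams) (z : ℝ → ℝ → Vec2) (t : ℝ) : ℝ :=
  (1/2) * ∫ ξ in (0:ℝ)..1, z ξ t ⬝ᵥ (P.Q ξ).mulVec (z ξ t)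

/-- The output `F(t) = (𝒦₁ z(·,t))`. -/
def outputF (P : TireParams) (z : ℝ → ℝ → Vec2) (t : ℝ) : Vec2 :=
  P.K1op (fun s => z s t)

/-!
The density `zᵀ Q z` is `C¹` in time with derivative continuous up to the boundary in space, so
`V' = ∫ ztᵀ Q z` because `Q` is symmetric. Substituting the PDE for `zt` splits `V'` into three
terms: the `𝒜` term is at most `-ω ∫ ‖z‖²` by Assumption 1, the source term is nonpositive by
Assumption 2 and `0 ≤ θ`, and the input term is exactly the supplied power `F ⬝ᵥ v`, since
`Q H = K₁`.
-/

section MatrixCalculus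

variable {m n : Type*} [Fintype n]

theorem dotProduct_mulVec_comm_of_isSymm {R : Type*} [CommSemiring R] {A : Matrix n n R}
    (hA : A.IsSymm) (x y : n → R) : x ⬝ᵥ A *ᵥ y = y ⬝ᵥ A *ᵥ x := by
  simpa only [hA.eq] using dotProduct_transpose_mulVec A x y

section Continuity

variable {R X : Type*} [NonUnitalNonAssocSemiring R] [TopologicalSpace R] [ContinuousAdd R]
  [ContinuousMul R] [TopologicalSpace X] {s : Set X} {w : X → n → R}

theorem continuousOn_dotProduct {u : X → n → R} (hu : ContinuousOn u s) (hw : ContinuousOn w s) :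
    ContinuousOn (fun x => u x ⬝ᵥ w x) s :=
  (continuous_fst.dotProduct continuous_snd).comp_continuousOn (hu.prodMk hw)

theorem continuousOn_mulVec {A : X → Matrix m n R} (hA : ContinuousOn A s)
    (hw : ContinuousOn w s) : ContinuousOn (fun x => A x *ᵥ w x) s :=
  (continuous_fst.matrix_mulVec continuous_snd).comp_continuousOn (hA.prodMk hw)

end Continuity

section Derivative

variable {𝕜 : Type*} [NontriviallyNormedField 𝕜] {u : 𝕜 → n → 𝕜} {u' : n → 𝕜} {t : 𝕜}

theorem hasDerivAt_dotProduct {w : 𝕜 → n → 𝕜} {w' : n → 𝕜} (hu : HasDerivAt u u' t)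
    (hw : HasDerivAt w w' t) : HasDerivAt (fun s => u s ⬝ᵥ w s) (u' ⬝ᵥ w t + u t ⬝ᵥ w') t := by
  simp only [dotProduct, ← Finset.sum_add_distrib]
  exact HasDerivAt.fun_sum fun i _ => (hasDerivAt_pi.1 hu i).mul (hasDerivAt_pi.1 hw i)

theorem hasDerivAt_mulVec [Finite m] (A : Matrix m n 𝕜) (hu : HasDerivAt u u' t) :
    HasDerivAt (fun s => A *ᵥ u s) (A *ᵥ u') t :=
  hasDerivAt_pi.2 fun i => by
    simpa only [mulVec, zero_dotProduct, zero_add] using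
      hasDerivAt_dotProduct (hasDerivAt_const t (A i)) hu

theorem hasDerivAt_dotProduct_mulVec_self {A : Matrix n n 𝕜} (hA : A.IsSymm)
    (hu : HasDerivAt u u' t) :
    HasDerivAt (fun s => u s ⬝ᵥ A *ᵥ u s) (2 * (u' ⬝ᵥ A *ᵥ u t)) t := by
  convert hasDerivAt_dotProduct hu (hasDerivAt_mulVec A hu) using 1
  rw [dotProduct_mulVec_comm_of_isSymm hA (u t), two_mul]

end Derivative

theorem intervalIntegral_dotProduct_const {𝕜 : Type*} [RCLike 𝕜] {f : ℝ → n → 𝕜} {a b : ℝ}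
    (hf : IntervalIntegrable f volume a b) (c : n → 𝕜) :
    ∫ x in a..b, f x ⬝ᵥ c = (∫ x in a..b, f x) ⬝ᵥ c :=
  (LinearMap.toContinuousLinearMap ((dotProductBilin 𝕜 𝕜).flip c)).intervalIntegral_comp_comm hf

end MatrixCalculus

section LeibnizRule

open Function

theorem hasDerivAt_intervalIntegral_of_continuousOn {𝕜 E : Type*} [RCLike 𝕜]
    [NormedAddCommGroup E] [NormedSpace ℝ E] [NormedSpace 𝕜 E] {F F' : ℝ → 𝕜 → E} {a b : ℝ}
    {U : Set 𝕜} {t : 𝕜} (hU : IsOpen U) (ht : t ∈ U)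
    (hF : ∀ s ∈ U, ContinuousOn (fun x => F x s) (uIcc a b))
    (hF' : ContinuousOn (uncurry F') (uIcc a b ×ˢ U))
    (hderiv : ∀ x ∈ uIcc a b, ∀ s ∈ U, HasDerivAt (F x) (F' x s) s) :
    HasDerivAt (fun s => ∫ x in a..b, F x s) (∫ x in a..b, F' x t) t := by
  obtain ⟨K, hK, htK, hKU⟩ := exists_compact_subset hU ht
  obtain ⟨C, hC⟩ := (isCompact_uIcc.prod hK).exists_bound_of_continuousOn
    (hF'.mono (prod_mono_right hKU))
  have hF'_int : IntervalIntegrable (fun x => F' x t) volume a b :=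
    (hF'.uncurry_right t ht).intervalIntegrable
  refine (intervalIntegral.hasDerivAt_integral_of_dominated_loc_of_deriv_le
    (F := fun s x => F x s) (F' := fun s x => F' x s) (bound := fun _ => C)
    (isOpen_interior.mem_nhds htK) ?_ (hF t ht).intervalIntegrable
    hF'_int.def'.aestronglyMeasurable ?_ intervalIntegrable_const ?_).2
  · filter_upwards [hU.mem_nhds ht] with s hs
    exact (hF s hs).intervalIntegrable.def'.aestronglyMeasurable
  · exact .of_forall fun x hx s hs => hC (x, s) ⟨uIoc_subset_uIcc hx, interior_subset hs⟩
  · exact .of_forall fun x hx s hs =>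
      hderiv x (uIoc_subset_uIcc hx) s (hKU (interior_subset hs))

theorem hasDerivAt_half_integral_dotProduct_mulVec_self {n : Type*} [Fintype n]
    {A : ℝ → Matrix n n ℝ} {u u' : ℝ → ℝ → n → ℝ} {a b : ℝ} {U : Set ℝ} {t : ℝ}
    (hU : IsOpen U) (ht : t ∈ U) (hA_symm : ∀ x ∈ uIcc a b, (A x).IsSymm)
    (hA : ContinuousOn A (uIcc a b)) (hu : ContinuousOn (uncurry u) (uIcc a b ×ˢ U))
    (hu' : ContinuousOn (uncurry u') (uIcc a b ×ˢ U))
    (hderiv : ∀ x ∈ uIcc a b, ∀ s ∈ U, HasDerivAt (u x) (u' x s) s) :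
    HasDerivAt (fun s => 1 / 2 * ∫ x in a..b, u x s ⬝ᵥ A x *ᵥ u x s)
      (∫ x in a..b, u' x t ⬝ᵥ A x *ᵥ u x t) t := by
  have hAu : ContinuousOn (fun p : ℝ × ℝ => A p.1 *ᵥ u p.1 p.2) (uIcc a b ×ˢ U) :=
    continuousOn_mulVec (hA.comp continuousOn_fst fun p hp => hp.1) hu
  have h_density : ContinuousOn (uncurry fun x s => u x s ⬝ᵥ A x *ᵥ u x s) (uIcc a b ×ˢ U) :=
    continuousOn_dotProduct hu hAu
  have h_power : ContinuousOn (uncurry fun x s => 2 * (u' x s ⬝ᵥ A x *ᵥ u x s)) (uIcc a b ×ˢ U) :=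
    continuousOn_const.mul (continuousOn_dotProduct hu' hAu)
  have h_energy := hasDerivAt_intervalIntegral_of_continuousOn hU ht
    (fun s hs => h_density.uncurry_right s hs) h_power
    (fun x hx s hs => hasDerivAt_dotProduct_mulVec_self (hA_symm x hx) (hderiv x hx s hs))
  refine (h_energy.const_mul (1 / 2)).congr_deriv ?_
  rw [intervalIntegral.integral_const_mul]
  ring

end LeibnizRule

theorem continuous_pbar (a : ℝ) : Continuous (pbar a) := by
  unfold pbar
  fun_prop

namespace TireParams

variable (P : TireParams)

theorem isUnit_det_Hmat : IsUnit P.Hmat.det := by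
  have hφ1 := P.φ1_mem.1.ne'
  have hφ2 := P.φ2_mem.1.ne'
  simp [Hmat, hφ1, hφ2]

theorem Q_mul_Hmat (ξ : ℝ) : P.Q ξ * P.Hmat = P.K1 ξ :=
  nonsing_inv_mul_cancel_right _ _ P.isUnit_det_Hmat

theorem isSymm_K1 (ξ : ℝ) : (P.K1 ξ).IsSymm :=
  isSymm_diagonal _

theorem isSymm_Q (ξ : ℝ) : (P.Q ξ).IsSymm := by
  rw [Q, K1, Hmat, ← diagonal_smul, inv_diagonal, diagonal_mul_diagonal]
  exact isSymm_diagonal _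

theorem continuous_K1 : Continuous P.K1 := by
  have hp1 := continuous_pbar P.a1
  have hp2 := continuous_pbar P.a2
  refine Continuous.matrix_diagonal (continuous_pi (Fin.forall_fin_two.2 ⟨?_, ?_⟩))
  · exact continuous_const.mul hp1
  · exact continuous_const.mul hp2

theorem continuous_Q : Continuous P.Q :=
  P.continuous_K1.matrix_mul continuous_const

theorem Hmat_mulVec_dotProduct_Q_mulVec (ξ : ℝ) (x y : Vec2) :
    P.Hmat *ᵥ x ⬝ᵥ P.Q ξ *ᵥ y = P.K1 ξ *ᵥ y ⬝ᵥ x := by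
  rw [dotProduct_mulVec_comm_of_isSymm (P.isSymm_Q ξ), mulVec_mulVec, Q_mul_Hmat,
    dotProduct_mulVec_comm_of_isSymm (P.isSymm_K1 ξ), dotProduct_comm]

theorem Kop_congr (K : ℝ → Mat2) {ζ η : ℝ → Vec2} (h : EqOn ζ η (Icc 0 1)) :
    Kop K ζ = Kop K η :=
  intervalIntegral.integral_congr fun ξ hξ => by
    rw [uIcc_of_le zero_le_one] at hξ
    simp only [h hξ]

theorem integral_dotProduct_Q_mulVec {ζ ζ' η : ℝ → Vec2} (θ : ℝ) (M : Mat2) (u : Vec2)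
    (hζ : ContinuousOn ζ (Icc 0 1)) (hζ' : ContinuousOn ζ' (Icc 0 1))
    (hη : ∀ ξ ∈ Ioo (0 : ℝ) 1,
      η ξ = P.Aop ζ ζ' ξ + θ • M *ᵥ (ζ ξ + P.K2op ζ) + P.Hmat *ᵥ u) :
    ∫ ξ in (0 : ℝ)..1, η ξ ⬝ᵥ P.Q ξ *ᵥ ζ ξ =
      (∫ ξ in (0 : ℝ)..1, P.Aop ζ ζ' ξ ⬝ᵥ P.Q ξ *ᵥ ζ ξ) +
        θ * (∫ ξ in (0 : ℝ)..1, ζ ξ ⬝ᵥ P.Q ξ *ᵥ (M *ᵥ (ζ ξ + P.K2op ζ))) + P.K1op ζ ⬝ᵥ u := by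
  have h_integrand : EqOn (fun ξ => η ξ ⬝ᵥ P.Q ξ *ᵥ ζ ξ)
      (fun ξ => P.Aop ζ ζ' ξ ⬝ᵥ P.Q ξ *ᵥ ζ ξ +
        θ * (ζ ξ ⬝ᵥ P.Q ξ *ᵥ (M *ᵥ (ζ ξ + P.K2op ζ))) + P.K1 ξ *ᵥ ζ ξ ⬝ᵥ u) (Ioo 0 1) := by
    intro ξ hξ
    simp only [hη ξ hξ, add_dotProduct, smul_dotProduct, smul_eq_mul,
      Hmat_mulVec_dotProduct_Q_mulVec]
    rw [dotProduct_mulVec_comm_of_isSymm (P.isSymm_Q ξ) (M *ᵥ _)]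
  rw [← uIcc_of_le zero_le_one] at hζ hζ'
  have hQ := P.continuous_Q.continuousOn (s := uIcc 0 1)
  have hA_int : IntervalIntegrable (fun ξ => P.Aop ζ ζ' ξ ⬝ᵥ P.Q ξ *ᵥ ζ ξ) volume 0 1 :=
    (continuousOn_dotProduct ((continuousOn_mulVec continuousOn_const hζ').neg.add
      continuousOn_const) (continuousOn_mulVec hQ hζ)).intervalIntegrable
  have hM_int : IntervalIntegrable
      (fun ξ => θ * (ζ ξ ⬝ᵥ P.Q ξ *ᵥ (M *ᵥ (ζ ξ + P.K2op ζ)))) volume 0 1 :=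
    (continuousOn_const.mul (continuousOn_dotProduct hζ (continuousOn_mulVec hQ
      (continuousOn_mulVec continuousOn_const (hζ.add continuousOn_const))))).intervalIntegrable
  have hK1ζ := continuousOn_mulVec P.continuous_K1.continuousOn hζ
  have hu_int : IntervalIntegrable (fun ξ => P.K1 ξ *ᵥ ζ ξ ⬝ᵥ u) volume 0 1 :=
    (continuousOn_dotProduct hK1ζ continuousOn_const).intervalIntegrable
  rw [intervalIntegral.integral_congr_Ioo_of_le zero_le_one h_integrand,
    intervalIntegral.integral_add (hA_int.add hM_int) hu_int,
    intervalIntegral.integral_add hA_int hM_int, intervalIntegral.integral_const_mul,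
    intervalIntegral_dotProduct_const hK1ζ.intervalIntegrable, K1op, Kop]

end TireParams

theorem IsC1On01.continuousOn {ζ ζ' : ℝ → Vec2} (h : IsC1On01 ζ ζ') :
    ContinuousOn ζ (Icc 0 1) :=
  fun ξ hξ => (h.1 ξ hξ).continuousWithinAt

theorem sqIntegrableOn01_of_continuous {ζ : ℝ → Vec2} (hζ : Continuous ζ) : SqIntegrableOn01 ζ :=
  ⟨hζ.measurable, Continuous.intervalIntegrable (by fun_prop) 0 1⟩

theorem Assumption2.integral_nonpos_of_continuousOn {P : TireParams} {S : Vec2 → Mat2}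
    (h : Assumption2 P S) (y : Vec2) {ζ : ℝ → Vec2} (hζ : ContinuousOn ζ (Icc 0 1)) :
    ∫ ξ in (0 : ℝ)..1, ζ ξ ⬝ᵥ P.Q ξ *ᵥ (S y *ᵥ (ζ ξ + P.K2op ζ)) ≤ 0 := by
  -- `SqIntegrableOn01` asks for measurability on all of `ℝ`, so `ζ` is first extended continuously.
  let ζext : ℝ → Vec2 := IccExtend zero_le_one ((Icc 0 1).domRestrict ζ)
  have hζext : Continuous ζext := hζ.domRestrict.Icc_extend'
  have h_eq : EqOn ζ ζext (Icc 0 1) := fun ξ hξ =>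
    (IccExtend_of_mem zero_le_one ((Icc 0 1).domRestrict ζ) hξ).symm
  have hK2 : P.K2op ζ = P.K2op ζext := TireParams.Kop_congr P.K2 h_eq
  convert h y ζext (sqIntegrableOn01_of_continuous hζext) using 1
  refine intervalIntegral.integral_congr fun ξ hξ => ?_
  rw [uIcc_of_le zero_le_one] at hξ
  simp only [h_eq hξ, hK2]

namespace IsClassicalSolution

variable {P : TireParams} {θ T t : ℝ} {S : Vec2 → Mat2} {v : ℝ → Vec2} {z zξ zt : ℝ → ℝ → Vec2}

theorem isC1On01 (hz : IsClassicalSolution P θ S T v z zξ zt) (ht : t ∈ Icc 0 T) :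
    IsC1On01 (fun ξ => z ξ t) (fun ξ => zξ ξ t) :=
  let ⟨h_space, _, _, hzξ, _⟩ := hz
  ⟨h_space t ht, hzξ.uncurry_right t ht⟩

theorem boundary_eq_zero (hz : IsClassicalSolution P θ S T v z zξ zt) (ht : t ∈ Icc 0 T) :
    z 0 t = 0 :=
  let ⟨_, _, _, _, _, _, h_boundary⟩ := hz
  h_boundary t ht

theorem zt_eq (hz : IsClassicalSolution P θ S T v z zξ zt) (ht : t ∈ Ioo 0 T) {ξ : ℝ}
    (hξ : ξ ∈ Ioo 0 1) :
    zt ξ t = P.Aop (fun ξ => z ξ t) (fun ξ => zξ ξ t) ξ +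
      θ • S (v t) *ᵥ (z ξ t + P.K2op fun ξ => z ξ t) + P.Hmat *ᵥ v t := by
  obtain ⟨_, _, _, _, _, h_pde, _⟩ := hz
  rw [eq_sub_of_add_eq (h_pde ξ hξ t ht), TireParams.Aop]
  abel

theorem hasDerivAt_storage (hz : IsClassicalSolution P θ S T v z zξ zt) (ht : t ∈ Ioo 0 T) :
    HasDerivAt (storage P z) (∫ ξ in (0 : ℝ)..1, zt ξ t ⬝ᵥ P.Q ξ *ᵥ z ξ t) t := by
  obtain ⟨_, h_time, hz_cont, _, hzt_cont, _, _⟩ := hz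
  have h_sub : uIcc 0 1 ×ˢ Ioo 0 T ⊆ Icc (0 : ℝ) 1 ×ˢ Icc 0 T := by
    rw [uIcc_of_le zero_le_one]
    exact prod_mono_right Ioo_subset_Icc_self
  refine hasDerivAt_half_integral_dotProduct_mulVec_self isOpen_Ioo ht (fun ξ _ => P.isSymm_Q ξ)
    P.continuous_Q.continuousOn (hz_cont.mono h_sub) (hzt_cont.mono h_sub) fun ξ hξ s hs => ?_
  rw [uIcc_of_le zero_le_one] at hξ
  exact (h_time ξ hξ s (Ioo_subset_Icc_self hs)).hasDerivAt (Icc_mem_nhds hs.1 hs.2)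

end IsClassicalSolution

theorem statement2_general (P : TireParams) {θ : ℝ} (hθ : 0 ≤ θ) {S : Vec2 → Mat2} {T : ℝ}
    {v : ℝ → Vec2} {z zξ zt : ℝ → ℝ → Vec2} (hz : IsClassicalSolution P θ S T v z zξ zt)
    {ω : ℝ} (h1 : Assumption1 P ω) (h2 : Assumption2 P S) :
    ∀ t ∈ Ioo (0 : ℝ) T, DifferentiableAt ℝ (storage P z) t ∧
      deriv (storage P z) t + ω * ∫ ξ in (0 : ℝ)..1, ∑ i, (z ξ t i) ^ 2 ≤ outputF P z t ⬝ᵥ v t := by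
  intro t ht
  have hV := hz.hasDerivAt_storage ht
  have hC1 := hz.isC1On01 (Ioo_subset_Icc_self ht)
  have h_balance := P.integral_dotProduct_Q_mulVec θ (S (v t)) (v t) hC1.continuousOn hC1.2
    fun ξ hξ => hz.zt_eq ht hξ
  have h_transport := h1 _ _ hC1 (hz.boundary_eq_zero (Ioo_subset_Icc_self ht))
  have h_source := mul_nonpos_of_nonneg_of_nonpos hθ
    (h2.integral_nonpos_of_continuousOn (v t) hC1.continuousOn)
  refine ⟨hV.differentiableAt, ?_⟩
  rw [hV.deriv, h_balance, outputF]
  linarith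

/-- along classical solutions, under Assumptions 1 and 2,
`F(t)ᵀ v(t) ≥ V'(t) + ω ∫₀¹ ‖z(ξ,t)‖² dξ` for every `t ∈ (0,T)`. -/
theorem statement2 (P : TireParams) (θ : ℝ) (hθ : 0 ≤ θ)
    (S : Vec2 → Mat2) (hS : Continuous S)
    (T : ℝ) (hT : 0 < T) (v : ℝ → Vec2) (hv : ContinuousOn v (Icc (0:ℝ) T))
    (z zξ zt : ℝ → ℝ → Vec2) (hz : IsClassicalSolution P θ S T v z zξ zt)
    (ω : ℝ) (hω : 0 < ω) (h1 : Assumption1 P ω) (h2 : Assumption2 P S) :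
    ∀ t ∈ Ioo (0:ℝ) T,
      outputF P z t ⬝ᵥ v t ≥
        deriv (storage P z) t + ω * ∫ ξ in (0:ℝ)..1, ∑ i, (z ξ t i) ^ 2 :=
  fun t ht => (statement2_general P hθ hz h1 h2 t ht).2
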